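/- Let λ > 0, λ̄ > 0, μ > 0, μ̄ > 0, d > 0 and 0 ≤ a < b. Let ψ : ℝ → ℝ be bounded, measurable, continuous on [0,∞), and differentiable on [a,b], and suppose that for all x ∈ [a,b]: d·ψ′(x) + (λ+λ̄)·ψ(x) = (λ/μ)·e^{−x/μ}·∫_0^x ψ(u)·e^{u/μ} du + λ·e^{−x/μ} + (λ̄/μ̄)·e^{x/μ̄}·∫_x^∞ ψ(u)·e^{−u/μ̄} du. Then ψ is three times differentiable on [a,b] and for all x ∈ [a,b]: d·μ·μ̄·ψ‴(x) + ( d·(μ̄−μ) + μ·μ̄·(λ+λ̄) )·ψ″(x) + ( λ̄·μ̄ − λ·μ − d )·ψ′(x) = 0. -/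

import Mathlib

open Real Set intervalIntegral

/-
The claim term `P` and the premium term `Q` on the right-hand side are exponentials times
integrals of `ψ` against exponentials, so they satisfy `(D + 1/μ) P = (λ/μ) ψ` and
`(D - 1/μ̄) Q = -(λ̄/μ̄) ψ`. Applying `(D + 1/μ) (D - 1/μ̄)` to `d ψ' + (λ + λ̄) ψ = P + Q`
therefore leaves a linear equation of order three in `ψ` alone, whose zeroth-order coefficient
`-(λ + λ̄)/(μ μ̄) + λ/(μ μ̄) + λ̄/(μ μ̄)` vanishes.
-/

open MeasureTheory

section LinearODE

variable {𝕜 : Type*} [NontriviallyNormedField 𝕜] {s : Set 𝕜} {d c : 𝕜} {ψ ψ' : 𝕜 → 𝕜}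

theorem hasDerivWithinAt_deriv_of_firstOrder {R : 𝕜 → 𝕜} {R' x : 𝕜} (hd : d ≠ 0) (hx : x ∈ s)
    (hψ : HasDerivWithinAt ψ (ψ' x) s x) (hR : HasDerivWithinAt R R' s x)
    (heq : ∀ y ∈ s, d * ψ' y + c * ψ y = R y) :
    HasDerivWithinAt ψ' ((R' - c * ψ' x) / d) s x := by
  have hsolve : ∀ y ∈ s, ψ' y = (R y - c * ψ y) / d := fun y hy => by
    rw [eq_div_iff hd]
    linear_combination heq y hy
  exact ((hR.sub (hψ.const_mul c)).div_const d).congr hsolve (hsolve x hx)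

/- With `D` the derivative, the conclusion is
`(D - α) (D - β) (d D + c) ψ = (D - β) (p ψ) + (D - α) (q ψ)`, collected by order. -/
theorem exists_thirdOrder_of_firstOrder_eq_add {P Q : 𝕜 → 𝕜} {α β p q : 𝕜} (hd : d ≠ 0)
    (hψ : ∀ x ∈ s, HasDerivWithinAt ψ (ψ' x) s x)
    (hP : ∀ x ∈ s, HasDerivWithinAt P (α * P x + p * ψ x) s x)
    (hQ : ∀ x ∈ s, HasDerivWithinAt Q (β * Q x + q * ψ x) s x)
    (heq : ∀ x ∈ s, d * ψ' x + c * ψ x = P x + Q x) :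
    ∃ ψ'' ψ''' : 𝕜 → 𝕜, ∀ x ∈ s,
      HasDerivWithinAt ψ' (ψ'' x) s x ∧
      HasDerivWithinAt ψ'' (ψ''' x) s x ∧
      d * ψ''' x + (c - d * (α + β)) * ψ'' x + (d * α * β - c * (α + β) - p - q) * ψ' x
        + (c * α * β + p * β + q * α) * ψ x = 0 := by
  let P₁ : 𝕜 → 𝕜 := fun x => α * P x + p * ψ x
  let Q₁ : 𝕜 → 𝕜 := fun x => β * Q x + q * ψ x
  let ψ'' : 𝕜 → 𝕜 := fun x => (P₁ x + Q₁ x - c * ψ' x) / d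
  let ψ''' : 𝕜 → 𝕜 := fun x =>
    ((α * P₁ x + p * ψ' x) + (β * Q₁ x + q * ψ' x) - c * ψ'' x) / d
  have hψ' : ∀ x ∈ s, HasDerivWithinAt ψ' (ψ'' x) s x := fun x hx =>
    hasDerivWithinAt_deriv_of_firstOrder hd hx (hψ x hx) ((hP x hx).add (hQ x hx)) heq
  have hψ''_eq : ∀ x, d * ψ'' x + c * ψ' x = P₁ x + Q₁ x := fun x => by
    rw [mul_div_cancel₀ _ hd, sub_add_cancel]
  have hψ'''_eq : ∀ x, d * ψ''' x + c * ψ'' x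
      = (α * P₁ x + p * ψ' x) + (β * Q₁ x + q * ψ' x) := fun x => by
    rw [mul_div_cancel₀ _ hd, sub_add_cancel]
  refine ⟨ψ'', ψ''', fun x hx => ⟨hψ' x hx, ?_, ?_⟩⟩
  · have hP₁ : HasDerivWithinAt P₁ (α * P₁ x + p * ψ' x) s x :=
      ((hP x hx).const_mul α).add ((hψ x hx).const_mul p)
    have hQ₁ : HasDerivWithinAt Q₁ (β * Q₁ x + q * ψ' x) s x :=
      ((hQ x hx).const_mul β).add ((hψ x hx).const_mul q)
    exact hasDerivWithinAt_deriv_of_firstOrder hd hx (hψ' x hx) (hP₁.add hQ₁)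
      fun y _ => hψ''_eq y
  · linear_combination hψ'''_eq x - (α + β) * hψ''_eq x + α * β * heq x hx

end LinearODE

section Integrals

variable {E : Type*} [NormedAddCommGroup E] [NormedSpace ℝ E]

theorem hasDerivWithinAt_exp_smul_of_integratingFactor {F : ℝ → E} {g : ℝ → ℝ} {s : Set ℝ}
    {g' x : ℝ} {v : E} (hg : HasDerivWithinAt g g' s x)
    (hF : HasDerivWithinAt F (exp (-g x) • v) s x) :
    HasDerivWithinAt (fun y => exp (g y) • F y) (g' • exp (g x) • F x + v) s x := by
  refine (hg.exp.smul hF).congr_deriv ?_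
  rw [smul_smul, ← exp_add, add_neg_cancel, exp_zero, one_smul, add_comm, smul_smul, mul_comm]

variable [CompleteSpace E] {f : ℝ → E} {a b c x : ℝ}

theorem hasDerivWithinAt_integral_Icc (hint : IntervalIntegrable f volume c a)
    (hcont : ContinuousOn f (Icc a b)) (hx : x ∈ Icc a b) :
    HasDerivWithinAt (fun y => ∫ u in c..y, f u) (f x) (Icc a b) x := by
  have hint_ax : IntervalIntegrable f volume a x :=
    (hcont.mono (Icc_subset_Icc_right hx.2)).intervalIntegrable_of_Icc hx.1
  have : Fact (x ∈ Icc a b) := ⟨hx⟩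
  exact integral_hasDerivWithinAt_right (hint.trans hint_ax)
    (hcont.stronglyMeasurableAtFilter_nhdsWithin measurableSet_Icc x) (hcont x hx)

theorem hasDerivWithinAt_integral_Ioi (hint : IntegrableOn f (Ioi a))
    (hcont : ContinuousOn f (Icc a b)) (hx : x ∈ Icc a b) :
    HasDerivWithinAt (fun y => ∫ u in Ioi y, f u) (-f x) (Icc a b) x := by
  have hsplit : ∀ y ∈ Icc a b, ∫ u in Ioi y, f u = (∫ u in Ioi a, f u) - ∫ u in a..y, f u :=
    fun y hy => by rw [← integral_Ioi_sub_Ioi hint hy.1, sub_sub_cancel]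
  exact ((hasDerivWithinAt_integral_Icc .refl hcont hx).const_sub _).congr hsplit (hsplit x hx)

end Integrals

theorem integrableOn_Ioi_mul_exp_neg_div {f : ℝ → ℝ} {a m M : ℝ} (hm : 0 < m)
    (hf : AEStronglyMeasurable f (volume.restrict (Ioi a)))
    (hM : ∀ x ∈ Ioi a, |f x| ≤ M) :
    IntegrableOn (fun u => f u * exp (-u / m)) (Ioi a) := by
  have hexp : IntegrableOn (fun u : ℝ => exp (-u / m)) (Ioi a) := by
    simpa only [neg_mul, inv_mul_eq_div, neg_div]
      using integrableOn_exp_mul_Ioi (neg_neg_of_pos (inv_pos.2 hm)) a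
  exact hexp.bdd_mul hf (ae_restrict_of_forall_mem measurableSet_Ioi hM)

/-- The contribution of claims to the equation for the ruin probability `ψ`: claims arrive with
intensity `rate` and are exponential of mean `mean`. The last summand accounts for claims larger
than the current surplus `x`, which cause ruin. -/
noncomputable def claimTerm (rate mean : ℝ) (ψ : ℝ → ℝ) (x : ℝ) : ℝ :=
  rate / mean * exp (-x / mean) * (∫ u in (0 : ℝ)..x, ψ u * exp (u / mean))
    + rate * exp (-x / mean)

/-- The contribution of premiums to the equation for the ruin probability `ψ`: premiums arrive with
intensity `rate`, are exponential of mean `mean`, and raise the surplus from `x` to `u > x`. -/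
noncomputable def premiumTerm (rate mean : ℝ) (ψ : ℝ → ℝ) (x : ℝ) : ℝ :=
  rate / mean * exp (x / mean) * ∫ u in Ioi x, ψ u * exp (-u / mean)

section RiskTerms

variable {rate mean a b x : ℝ} {ψ : ℝ → ℝ}

theorem hasDerivWithinAt_claimTerm (hint : IntervalIntegrable ψ volume 0 a)
    (hcont : ContinuousOn ψ (Icc a b)) (hx : x ∈ Icc a b) :
    HasDerivWithinAt (claimTerm rate mean ψ)
      (-mean⁻¹ * claimTerm rate mean ψ x + rate / mean * ψ x) (Icc a b) x := by
  have hfactor : ∀ y, claimTerm rate mean ψ y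
      = exp (-y / mean) * (rate / mean * (∫ u in (0 : ℝ)..y, ψ u * exp (u / mean)) + rate) :=
    fun y => by unfold claimTerm; ring
  have hexponent : HasDerivWithinAt (fun y : ℝ => -y / mean) (-mean⁻¹) (Icc a b) x :=
    ((hasDerivWithinAt_neg x _).div_const mean).congr_deriv (by rw [neg_div, one_div])
  have hintegral : HasDerivWithinAt (fun y => ∫ u in (0 : ℝ)..y, ψ u * exp (u / mean))
      (ψ x * exp (x / mean)) (Icc a b) x :=
    hasDerivWithinAt_integral_Icc (hint.mul_continuousOn (by fun_prop)) (by fun_prop) hx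
  have hbracket := ((hintegral.const_mul (rate / mean)).add_const rate).congr_deriv
    (show _ = exp (-(-x / mean)) • (rate / mean * ψ x) by
      rw [neg_div, neg_neg, smul_eq_mul]; ring)
  rw [funext hfactor]
  exact hasDerivWithinAt_exp_smul_of_integratingFactor hexponent hbracket

theorem hasDerivWithinAt_premiumTerm
    (hint : IntegrableOn (fun u => ψ u * exp (-u / mean)) (Ioi a))
    (hcont : ContinuousOn ψ (Icc a b)) (hx : x ∈ Icc a b) :
    HasDerivWithinAt (premiumTerm rate mean ψ)
      (mean⁻¹ * premiumTerm rate mean ψ x + -(rate / mean) * ψ x) (Icc a b) x := by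
  have hfactor : ∀ y, premiumTerm rate mean ψ y
      = exp (y / mean) * (rate / mean * ∫ u in Ioi y, ψ u * exp (-u / mean)) :=
    fun y => by unfold premiumTerm; ring
  have hexponent : HasDerivWithinAt (fun y : ℝ => y / mean) mean⁻¹ (Icc a b) x :=
    ((hasDerivWithinAt_id x _).div_const mean).congr_deriv (one_div mean)
  have hintegral : HasDerivWithinAt (fun y => ∫ u in Ioi y, ψ u * exp (-u / mean))
      (-(ψ x * exp (-x / mean))) (Icc a b) x :=
    hasDerivWithinAt_integral_Ioi hint (by fun_prop) hx
  have hbracket := (hintegral.const_mul (rate / mean)).congr_deriv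
    (show _ = exp (-(x / mean)) • (-(rate / mean) * ψ x) by
      rw [neg_div, smul_eq_mul]; ring)
  rw [funext hfactor]
  exact hasDerivWithinAt_exp_smul_of_integratingFactor hexponent hbracket

end RiskTerms

theorem stmt_4_general {lam lamBar mu muBar d a b : ℝ}
    (hmu : mu ≠ 0) (hmuBar : muBar ≠ 0) (hd : d ≠ 0) {ψ ψ' : ℝ → ℝ}
    (hint : IntervalIntegrable ψ volume 0 a)
    (hint_tail : IntegrableOn (fun u => ψ u * exp (-u / muBar)) (Ioi a))
    (hdiff : ∀ x ∈ Icc a b, HasDerivWithinAt ψ (ψ' x) (Icc a b) x)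
    (heq : ∀ x ∈ Icc a b,
      d * ψ' x + (lam + lamBar) * ψ x
        = lam / mu * exp (-x / mu) * (∫ u in (0 : ℝ)..x, ψ u * exp (u / mu))
          + lam * exp (-x / mu)
          + lamBar / muBar * exp (x / muBar) * ∫ u in Ioi x, ψ u * exp (-u / muBar)) :
    ∃ ψ'' ψ''' : ℝ → ℝ, ∀ x ∈ Icc a b,
      HasDerivWithinAt ψ' (ψ'' x) (Icc a b) x ∧
      HasDerivWithinAt ψ'' (ψ''' x) (Icc a b) x ∧
      d * mu * muBar * ψ''' x
        + (d * (muBar - mu) + mu * muBar * (lam + lamBar)) * ψ'' x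
        + (lamBar * muBar - lam * mu - d) * ψ' x = 0 := by
  have hcont : ContinuousOn ψ (Icc a b) := fun x hx => (hdiff x hx).continuousWithinAt
  obtain ⟨ψ'', ψ''', hderiv⟩ := exists_thirdOrder_of_firstOrder_eq_add hd hdiff
    (fun x hx => hasDerivWithinAt_claimTerm hint hcont hx)
    (fun x hx => hasDerivWithinAt_premiumTerm hint_tail hcont hx) heq
  refine ⟨ψ'', ψ''', fun x hx => ?_⟩
  obtain ⟨hψ', hψ'', hode⟩ := hderiv x hx
  refine ⟨hψ', hψ'', ?_⟩
  field_simp at hode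
  linear_combination hode

theorem stmt_4 (lam lamBar mu muBar d a b : ℝ)
    (hlam : 0 < lam) (hlamBar : 0 < lamBar) (hmu : 0 < mu) (hmuBar : 0 < muBar)
    (hd : 0 < d) (ha : 0 ≤ a) (hab : a < b)
    (ψ ψ' : ℝ → ℝ)
    (hbdd : ∃ M : ℝ, ∀ x, |ψ x| ≤ M)
    (hmeas : Measurable ψ)
    (hcont : ContinuousOn ψ (Set.Ici 0))
    (hdiff : ∀ x ∈ Set.Icc a b, HasDerivWithinAt ψ (ψ' x) (Set.Icc a b) x)
    (heq : ∀ x ∈ Set.Icc a b,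
      d * ψ' x + (lam + lamBar) * ψ x
        = lam / mu * Real.exp (-x / mu) * (∫ u in (0 : ℝ)..x, ψ u * Real.exp (u / mu))
          + lam * Real.exp (-x / mu)
          + lamBar / muBar * Real.exp (x / muBar)
              * ∫ u in Set.Ioi x, ψ u * Real.exp (-u / muBar)) :
    ∃ ψ'' ψ''' : ℝ → ℝ, ∀ x ∈ Set.Icc a b,
      HasDerivWithinAt ψ' (ψ'' x) (Set.Icc a b) x ∧
      HasDerivWithinAt ψ'' (ψ''' x) (Set.Icc a b) x ∧
      d * mu * muBar * ψ''' x
        + (d * (muBar - mu) + mu * muBar * (lam + lamBar)) * ψ'' x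
        + (lamBar * muBar - lam * mu - d) * ψ' x = 0 := by
  obtain ⟨M, hM⟩ := hbdd
  have hint : IntervalIntegrable ψ volume 0 a :=
    (hcont.mono Icc_subset_Ici_self).intervalIntegrable_of_Icc ha
  have hint_tail : IntegrableOn (fun u => ψ u * exp (-u / muBar)) (Ioi a) :=
    integrableOn_Ioi_mul_exp_neg_div hmuBar hmeas.aestronglyMeasurable fun u _ => hM u
  exact stmt_4_general hmu.ne' hmuBar.ne' hd.ne' hint hint_tail hdiff heq
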